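/- Consider the unital *-subalgebra N = M_n ⊗ ℂ1_m ⊆ M_n ⊗ M_m ≅ M_{nm}. Then for every p ∈ [1/2, ∞]: −log λ(M_n ⊗ M_m : N) = D_p(M_n ⊗ M_m ‖ N) = log(m · min(n,m)), while D_{p,cb}(M_n ⊗ M_m ‖ N) = 2 log m. -/

import Mathlib

open scoped ENNReal Classical ComplexOrder
open Matrix

noncomputable section

namespace GJL

variable {n : Type*} [Fintype n] [DecidableEq n]

/-- `Mat n` is the matrix *-algebra with rows and columns indexed by `n`. -/
abbrev Mat (n : Type*) [Fintype n] [DecidableEq n] := Matrix n n ℂ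

/-- A density matrix: positive semidefinite with trace one. -/
def IsDensity (ρ : Mat n) : Prop := ρ.PosSemidef ∧ ρ.trace = 1

/-- The real part of the (matrix) trace. -/
def traceR (A : Mat n) : ℝ := (A.trace).re

/-- Real matrix powers via the continuous functional calculus.  For positive
semidefinite matrices and negative exponents this is the generalized inverse
power on the support, since `(0 : ℝ) ^ r = 0` for `r ≠ 0`. -/
def mpow (A : Mat n) (r : ℝ) : Mat n := cfc (fun x : ℝ => x ^ r) A

/-- Matrix logarithm on the support (`Real.log 0 = 0`). -/
def mlog (A : Mat n) : Mat n := cfc Real.log A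

/-- Schatten `p`-norm `(Tr ((x* x)^(p/2)))^(1/p)`. -/
def snorm (p : ℝ) (x : Mat n) : ℝ := (traceR (mpow (xᴴ * x) (p/2))) ^ (1/p)

/-- Operator norm `‖x‖_∞`. -/
def opNorm (x : Mat n) : ℝ := ‖(Matrix.toEuclideanCLM (𝕜 := ℂ) x : EuclideanSpace ℂ n →L[ℂ] EuclideanSpace ℂ n)‖

/-- The support projection of `ρ` is dominated by that of `σ` (for positive
semidefinite matrices: `ker σ ⊆ ker ρ`). -/
def suppLe (ρ σ : Mat n) : Prop := ∀ v, σ.mulVec v = 0 → ρ.mulVec v = 0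

/-- `e` is the support projection of `ρ`. -/
def IsSupportProj (ρ e : Mat n) : Prop :=
  e.IsHermitian ∧ e * e = e ∧ ∀ v, e.mulVec v = 0 ↔ ρ.mulVec v = 0

/-- `D_∞(ρ‖σ) = log min {λ ≥ 0 | ρ ≤ λ σ}`, `⊤` if no such `λ` exists. -/
def Dinf (ρ σ : Mat n) : EReal :=
  if ∃ c : ℝ, 0 ≤ c ∧ (c • σ - ρ).PosSemidef then
    ((Real.log (sInf {c : ℝ | 0 ≤ c ∧ (c • σ - ρ).PosSemidef}) : ℝ) : EReal)
  else ⊤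

/-- Umegaki relative entropy `D(ρ‖σ) = Tr(ρ log ρ - ρ log σ)`, `⊤` if the
support condition fails. -/
def DU (ρ σ : Mat n) : EReal :=
  if suppLe ρ σ then ((traceR (ρ * mlog ρ - ρ * mlog σ) : ℝ) : EReal) else ⊤

/-- The sandwiched matrix `σ^{(1-p)/(2p)} ρ σ^{(1-p)/(2p)}`; note that for
`p > 1` the exponent `(1-p)/(2p)` equals `-1/(2p')` with `1/p + 1/p' = 1`. -/
def sandwich (p : ℝ) (ρ σ : Mat n) : Mat n :=
  mpow σ ((1 - p)/(2*p)) * ρ * mpow σ ((1 - p)/(2*p))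

/-- The sandwiched Rényi relative entropy `D_p(ρ‖σ)` for `p ∈ [1/2, ∞]`:
for `p ∈ (1,∞)` it is `p' log ‖σ^{-1/(2p')} ρ σ^{-1/(2p')}‖_p
= (p-1)⁻¹ log Tr ((σ^{-1/(2p')} ρ σ^{-1/(2p')})^p)` when the support of `ρ` is
dominated by that of `σ` and `⊤` otherwise; for `p ∈ [1/2, 1)` it is
`(p-1)⁻¹ log Tr ((σ^{(1-p)/(2p)} ρ σ^{(1-p)/(2p)})^p)` (`⊤` when the trace
vanishes, i.e. when the honest value is `+∞`); `D_1` is the Umegaki relative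
entropy and `D_∞` the max-relative entropy. -/
def Dp (p : ℝ≥0∞) (ρ σ : Mat n) : EReal :=
  if p = ⊤ then Dinf ρ σ
  else if p = 1 then DU ρ σ
  else if 1 < p.toReal ∧ ¬ suppLe ρ σ then ⊤
  else if traceR (mpow (sandwich p.toReal ρ σ) p.toReal) = 0 then ⊤
  else (((p.toReal - 1)⁻¹ * Real.log (traceR (mpow (sandwich p.toReal ρ σ) p.toReal)) : ℝ) : EReal)

/-- `D_p(ρ‖S) = inf { D_p(ρ‖σ) | σ a density in S }`. -/
def DpSet (p : ℝ≥0∞) (ρ : Mat n) (S : Set (Mat n)) : EReal :=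
  ⨅ σ ∈ {σ ∈ S | IsDensity σ}, Dp p ρ σ

/-- `D_p(A‖S) = sup { D_p(ρ‖S) | ρ a density in A }`. -/
def DpRel (p : ℝ≥0∞) (A S : Set (Mat n)) : EReal :=
  ⨆ ρ ∈ {ρ ∈ A | IsDensity ρ}, DpSet p ρ S

open scoped Kronecker in
/-- The algebraic tensor product `N₁ ⊗ N₂ ⊆ M_{n₁} ⊗ M_{n₂} = M_{n₁ × n₂}`,
realized as the linear span of Kronecker products. -/
def tensorSpan {n₁ n₂ : Type*} [Fintype n₁] [DecidableEq n₁] [Fintype n₂] [DecidableEq n₂]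
    (N₁ : Set (Mat n₁)) (N₂ : Set (Mat n₂)) : Set (Mat (n₁ × n₂)) :=
  ↑(Submodule.span ℂ {z : Mat (n₁ × n₂) | ∃ x ∈ N₁, ∃ y ∈ N₂, z = x ⊗ₖ y})

/-- `D_{p,cb}(M‖N) = sup_k D_p(M_k ⊗ M ‖ M_k ⊗ N)`. -/
def DpCb (p : ℝ≥0∞) (N : Set (Mat n)) : EReal :=
  ⨆ k : ℕ, DpRel p Set.univ (tensorSpan (Set.univ : Set (Mat (Fin k))) N)

/-- `E` is the trace preserving conditional expectation onto `N`, i.e. the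
orthogonal projection onto `N` with respect to the Hilbert–Schmidt inner
product `⟨x,y⟩ = Tr(x* y)`. -/
def IsCondExp (N : Set (Mat n)) (E : Mat n →ₗ[ℂ] Mat n) : Prop :=
  (∀ x, E x ∈ N) ∧ (∀ x ∈ N, E x = x) ∧
    ∀ x y, y ∈ N → ((E x)ᴴ * y).trace = (xᴴ * y).trace

/-- The Pimsner–Popa index constant
`λ(M:N) = max {c ≥ 0 | c x ≤ E(x) for all x ≥ 0}`. -/
def ppIndex (E : Mat n →ₗ[ℂ] Mat n) : ℝ :=
  sSup {c : ℝ | 0 ≤ c ∧ ∀ x : Mat n, x.PosSemidef → (E x - c • x).PosSemidef}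

/-- von Neumann entropy `H(ρ) = -Tr(ρ log ρ)`. -/
def vnEntropy (ρ : Mat n) : ℝ := - traceR (ρ * mlog ρ)

/-- The amplification `id_{M_k} ⊗ Φ` acting on `M_k ⊗ M_n = M_{k × n}`,
applying `Φ` blockwise. -/
def ampFun (k : Type*) [Fintype k] [DecidableEq k] (Φ : Mat n →ₗ[ℂ] Mat n)
    (X : Mat (k × n)) : Mat (k × n) :=
  Matrix.of fun a b => Φ (Matrix.of fun s t => X (a.1, s) (b.1, t)) a.2 b.2

/-- Complete positivity: all amplifications `id_{M_k} ⊗ Φ` preserve positive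
semidefiniteness. -/
def IsCP (Φ : Mat n →ₗ[ℂ] Mat n) : Prop :=
  ∀ (k : ℕ) (X : Mat (Fin k × n)), X.PosSemidef → (ampFun (Fin k) Φ X).PosSemidef

/-- Completely positive and trace preserving. -/
def IsCPTP (Φ : Mat n →ₗ[ℂ] Mat n) : Prop :=
  IsCP Φ ∧ ∀ x : Mat n, (Φ x).trace = x.trace

/-- Scalar multiples of the identity, `ℂ·1`. -/
def scalarAlg (n : Type*) [Fintype n] [DecidableEq n] : Set (Mat n) :=
  {x : Mat n | ∃ c : ℂ, x = c • (1 : Mat n)}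

/-!
Both bounds on `D_p` come from Jensen's inequality for spectral measures. If `ρ ≤ c σ`, then
`D_p(ρ‖σ) ≤ log c` for every `p`. If `ρ` is the pure state of a unit vector `v`, the trace defining
`D_p(ρ‖σ)` is a power of `⟨v, σ^((1-p)/p) v⟩`; for `p ≥ 1/2` the exponent is at most `1`, so that
this power function is concave on `[0, ∞)` or convex and decreasing on `(0, ∞)`, and Jensen gives
`D_p(ρ‖σ) ≥ -log ⟨v, σ v⟩`. So `D_p(M‖N) = log c` for all `p ≥ 1/2` as soon as every density is at
most `c` times a density of `N` while some unit vector has expectation at most `c⁻¹` in every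
density of `N`. If moreover `x ≤ c E(x)` for all `x ≥ 0`, then `λ(M : N) = c⁻¹`, by the same vector.

For `N = M_A ⊗ ℂ1` and a positive `X` with partial trace `Y = Tr_B X`, one has `E X = |B|⁻¹ Y ⊗ 1`,
and `X ≤ min(|A|, |B|) Y ⊗ 1`: expand a vector over the basis of `B`, respectively over an
eigenbasis of `Y`, and apply Cauchy–Schwarz. A maximally entangled vector shows that
`c = |B| min(|A|, |B|)` is optimal. Tensoring with `M_k` replaces `|A|` by `k |A|`, so that the
minimum is at most `|B|`, with equality from `k = |B|` on.
-/

section Spectral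

/-- The quadratic form `v ↦ ⟨v, A v⟩` of a matrix, as a real number; it is used for Hermitian `A`,
where taking the real part loses nothing. -/
def quadForm (A : Mat n) (v : n → ℂ) : ℝ := (star v ⬝ᵥ A *ᵥ v).re

/-- The `j`-th vector of the orthonormal eigenbasis of a Hermitian matrix, as a column of the
diagonalizing unitary. -/
def eigvec {A : Mat n} (hA : A.IsHermitian) (j : n) : n → ℂ :=
  fun i => (hA.eigenvectorUnitary : Mat n) i j

/-- The weight `|⟨e_j, v⟩|²` of the vector `v` at the `j`-th eigenvector of `A`: the spectral
measure of `A` in the state `v`. -/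
def spectralWeight {A : Mat n} (hA : A.IsHermitian) (v : n → ℂ) (j : n) : ℝ :=
  ‖star (eigvec hA j) ⬝ᵥ v‖ ^ 2

lemma quadForm_sub (A B : Mat n) (v : n → ℂ) :
    quadForm (A - B) v = quadForm A v - quadForm B v := by
  rw [quadForm, sub_mulVec, dotProduct_sub, Complex.sub_re, quadForm, quadForm]

lemma quadForm_smul (c : ℝ) (A : Mat n) (v : n → ℂ) :
    quadForm (c • A) v = c * quadForm A v := by
  rw [quadForm, smul_mulVec, dotProduct_smul, Complex.real_smul, Complex.re_ofReal_mul, quadForm]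

lemma quadForm_neg (A : Mat n) (v : n → ℂ) : quadForm (-A) v = -quadForm A v := by
  rw [quadForm, neg_mulVec, dotProduct_neg, Complex.neg_re, quadForm]

lemma quadForm_nonneg {A : Mat n} (hA : A.PosSemidef) (v : n → ℂ) : 0 ≤ quadForm A v :=
  hA.re_dotProduct_nonneg v

lemma quadForm_le_of_posSemidef {A B : Mat n} {c : ℝ} (h : (c • A - B).PosSemidef) (v : n → ℂ) :
    quadForm B v ≤ c * quadForm A v := by
  have := quadForm_nonneg h v
  rwa [quadForm_sub, quadForm_smul, sub_nonneg] at this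

lemma ofReal_quadForm {A : Mat n} (hA : A.IsHermitian) (v : n → ℂ) :
    ((quadForm A v : ℝ) : ℂ) = star v ⬝ᵥ A *ᵥ v :=
  Complex.ext rfl (hA.im_star_dotProduct_mulVec_self v).symm

lemma posSemidef_sub_of_quadForm_le {A B : Mat n} {c : ℝ} (hA : A.IsHermitian)
    (hB : B.IsHermitian) (h : ∀ v, quadForm B v ≤ c * quadForm A v) :
    (c • A - B).PosSemidef := by
  have hAB : (c • A - B).IsHermitian := (hA.smul (IsSelfAdjoint.all c)).sub hB
  refine .of_dotProduct_mulVec_nonneg hAB fun v => ?_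
  rw [← ofReal_quadForm hAB, quadForm_sub, quadForm_smul]
  exact_mod_cast sub_nonneg.2 (h v)

variable {A : Mat n} (hA : A.IsHermitian)

lemma star_eigvec_dotProduct_eigvec (j : n) : star (eigvec hA j) ⬝ᵥ eigvec hA j = 1 := by
  have := congrFun (congrFun (Unitary.coe_star_mul_self hA.eigenvectorUnitary) j) j
  simpa [mul_apply, dotProduct, eigvec] using this

lemma mulVec_eigvec (j : n) : A *ᵥ eigvec hA j = (hA.eigenvalues j : ℂ) • eigvec hA j :=
  hA.mulVec_eigenvectorBasis j

lemma eigenvectorUnitary_mul_conjTranspose :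
    (hA.eigenvectorUnitary : Mat n) * (hA.eigenvectorUnitary : Mat n)ᴴ = 1 :=
  Unitary.coe_mul_star_self hA.eigenvectorUnitary

lemma spectralWeight_nonneg (v : n → ℂ) (j : n) : 0 ≤ spectralWeight hA v j := sq_nonneg _

lemma cfc_eq_eigenvectorUnitary (f : ℝ → ℝ) :
    cfc f A = (hA.eigenvectorUnitary : Mat n) *
      diagonal (fun j => ((f (hA.eigenvalues j) : ℝ) : ℂ)) * (hA.eigenvectorUnitary : Mat n)ᴴ := by
  rw [hA.cfc_eq f, IsHermitian.cfc, Unitary.conjStarAlgAut_apply]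
  rfl

lemma quadForm_cfc (f : ℝ → ℝ) (v : n → ℂ) :
    quadForm (cfc f A) v = ∑ j, spectralWeight hA v j * f (hA.eigenvalues j) := by
  have hstar : star v ᵥ* (hA.eigenvectorUnitary : Mat n) =
      star ((hA.eigenvectorUnitary : Mat n)ᴴ *ᵥ v) := by
    rw [star_mulVec, conjTranspose_conjTranspose]
  rw [quadForm, cfc_eq_eigenvectorUnitary hA f, ← mulVec_mulVec, ← mulVec_mulVec,
    dotProduct_mulVec, hstar, dotProduct, Complex.re_sum]
  refine Finset.sum_congr rfl fun j _ => ?_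
  have hweight : spectralWeight hA v j =
      Complex.normSq (((hA.eigenvectorUnitary : Mat n)ᴴ *ᵥ v) j) :=
    (Complex.normSq_eq_norm_sq _).symm
  rw [mulVec_diagonal, Pi.star_apply, hweight, Complex.normSq_apply]
  simp only [Complex.star_def, Complex.mul_re, Complex.conj_re, Complex.conj_im,
    Complex.ofReal_re, Complex.ofReal_im, Complex.mul_im]
  ring

lemma quadForm_eq_sum (v : n → ℂ) :
    quadForm A v = ∑ j, spectralWeight hA v j * hA.eigenvalues j := by
  simpa only [cfc_id ℝ A hA.isSelfAdjoint, id] using quadForm_cfc hA id v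

lemma sum_spectralWeight {v : n → ℂ} (hv : star v ⬝ᵥ v = 1) :
    ∑ j, spectralWeight hA v j = 1 := by
  simpa [cfc_const_one ℝ A hA.isSelfAdjoint, quadForm, hv] using
    (quadForm_cfc hA (fun _ => 1) v).symm

lemma traceR_eq_sum_quadForm (M : Mat n) : traceR M = ∑ j, quadForm M (eigvec hA j) := by
  have hdiag (j : n) : star (eigvec hA j) ⬝ᵥ M *ᵥ eigvec hA j =
      ((hA.eigenvectorUnitary : Mat n)ᴴ * (M * (hA.eigenvectorUnitary : Mat n))) j j := by
    rw [mul_apply]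
    rfl
  have htrace : M.trace = ∑ j, star (eigvec hA j) ⬝ᵥ M *ᵥ eigvec hA j := by
    simp only [hdiag]
    change _ = trace _
    rw [trace_mul_comm, mul_assoc, eigenvectorUnitary_mul_conjTranspose, mul_one]
  rw [traceR, htrace, Complex.re_sum]
  rfl

lemma traceR_mul_eq_sum (M : Mat n) :
    traceR (A * M) = ∑ j, hA.eigenvalues j * quadForm M (eigvec hA j) := by
  rw [traceR_eq_sum_quadForm hA]
  refine Finset.sum_congr rfl fun j _ => ?_
  have hstar : star (eigvec hA j) ᵥ* A = (hA.eigenvalues j : ℂ) • star (eigvec hA j) := by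
    have h := congrArg star (mulVec_eigvec hA j)
    rwa [star_mulVec, hA.eq, star_smul, Complex.star_def, Complex.conj_ofReal] at h
  rw [quadForm, ← mulVec_mulVec, dotProduct_mulVec, hstar, smul_dotProduct, smul_eq_mul,
    Complex.re_ofReal_mul, quadForm]

lemma traceR_cfc (f : ℝ → ℝ) : traceR (cfc f A) = ∑ j, f (hA.eigenvalues j) := by
  rw [traceR, cfc_eq_eigenvectorUnitary hA f, trace_mul_comm, ← mul_assoc, ← star_eq_conjTranspose,
    Unitary.coe_star_mul_self hA.eigenvectorUnitary, one_mul, trace_diagonal, Complex.re_sum]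
  simp only [Complex.ofReal_re]

lemma sum_smul_eigvec (v : n → ℂ) :
    ∑ j, (star (eigvec hA j) ⬝ᵥ v) • eigvec hA j = v := by
  conv_rhs => rw [← one_mulVec v, ← eigenvectorUnitary_mul_conjTranspose hA, ← mulVec_mulVec]
  ext a
  simp only [mulVec, dotProduct, eigvec, Finset.sum_apply, Pi.smul_apply, smul_eq_mul,
    Pi.star_apply]
  exact Finset.sum_congr rfl fun i _ => mul_comm _ _

lemma continuousOn_spectrum (f : ℝ → ℝ) : ContinuousOn f (spectrum ℝ A) :=
  A.finite_real_spectrum.continuousOn f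

lemma cfc_mul_cfc (f g : ℝ → ℝ) : cfc f A * cfc g A = cfc (fun x => f x * g x) A :=
  (cfc_mul f g A (continuousOn_spectrum f) (continuousOn_spectrum g)).symm

lemma cfc_congr_of_nonneg (hA : A.PosSemidef) {f g : ℝ → ℝ} (h : ∀ x, 0 ≤ x → f x = g x) :
    cfc f A = cfc g A := by
  refine cfc_congr fun x hx => ?_
  rw [hA.1.spectrum_real_eq_range_eigenvalues] at hx
  obtain ⟨j, rfl⟩ := hx
  exact h _ (hA.eigenvalues_nonneg j)

end Spectral

section Jensen

lemma quadForm_cfc_mem_and_map_le {A : Mat n} (hA : A.IsHermitian) {v : n → ℂ}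
    (hv : star v ⬝ᵥ v = 1) {s : Set ℝ} {f g : ℝ → ℝ} (hf : ConvexOn ℝ s f)
    (hg : ∀ j, spectralWeight hA v j ≠ 0 → g (hA.eigenvalues j) ∈ s) :
    quadForm (cfc g A) v ∈ s ∧
      f (quadForm (cfc g A) v) ≤ quadForm (cfc (fun x => f (g x)) A) v := by
  set w := spectralWeight hA v
  set t := Finset.univ.filter fun j => w j ≠ 0
  have hrestrict (h : ℝ → ℝ) :
      ∑ j ∈ t, w j • h (hA.eigenvalues j) = quadForm (cfc h A) v := by
    rw [quadForm_cfc hA]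
    exact Finset.sum_filter_of_ne fun j _ hj => left_ne_zero_of_mul hj
  have hw0 : ∀ j ∈ t, 0 ≤ w j := fun j _ => spectralWeight_nonneg hA v j
  have hw1 : ∑ j ∈ t, w j = 1 := by
    rw [Finset.sum_filter_ne_zero, sum_spectralWeight hA hv]
  have hmem : ∀ j ∈ t, g (hA.eigenvalues j) ∈ s := fun j hj => hg j (Finset.mem_filter.1 hj).2
  rw [← hrestrict g, ← hrestrict fun x => f (g x)]
  exact ⟨hf.1.sum_mem hw0 hw1 hmem, hf.map_sum_le hw0 hw1 hmem⟩

lemma le_quadForm_cfc_of_antitoneOn {A : Mat n} (hA : A.IsHermitian) {v : n → ℂ}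
    (hv : star v ⬝ᵥ v = 1) {s : Set ℝ} {f g : ℝ → ℝ} (hf : ConvexOn ℝ s f)
    (hanti : AntitoneOn f s) (hg : ∀ j, spectralWeight hA v j ≠ 0 → g (hA.eigenvalues j) ∈ s)
    {b : ℝ} (hb : b ∈ s) (h : quadForm (cfc g A) v ≤ b) :
    f b ≤ quadForm (cfc (fun x => f (g x)) A) v :=
  have ⟨hmem, hle⟩ := quadForm_cfc_mem_and_map_le hA hv hf hg
  (hanti hmem hb h).trans hle

lemma convexOn_neg_log_Ioi : ConvexOn ℝ (Set.Ioi 0) fun x => -Real.log x :=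
  strictConcaveOn_log_Ioi.concaveOn.neg

lemma antitoneOn_neg_log_Ioi : AntitoneOn (fun x => -Real.log x) (Set.Ioi 0) :=
  fun _ hx _ _ hxy => neg_le_neg (Real.log_le_log hx hxy)

lemma convexOn_rpow_Ioi_of_nonpos {r : ℝ} (hr : r ≤ 0) :
    ConvexOn ℝ (Set.Ioi 0) fun x : ℝ => x ^ r := by
  have hlog : ConvexOn ℝ (Set.Ioi 0) fun x => -r * -Real.log x :=
    convexOn_neg_log_Ioi.smul (neg_nonneg.2 hr)
  have hexp : ConvexOn ℝ (Set.Ioi 0) fun x => Real.exp (-r * -Real.log x) :=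
    ⟨convex_Ioi 0, fun x hx y hy a b ha hb hab =>
      (Real.exp_le_exp.2 (hlog.2 hx hy ha hb hab)).trans
        (convexOn_exp.2 (Set.mem_univ _) (Set.mem_univ _) ha hb hab)⟩
  refine hexp.congr fun x hx => ?_
  rw [Real.rpow_def_of_pos hx, mul_comm, ← neg_mul_neg]

lemma convexOn_neg_rpow_Ici {r : ℝ} (hr0 : 0 ≤ r) (hr1 : r ≤ 1) :
    ConvexOn ℝ (Set.Ici 0) fun x : ℝ => -x ^ r :=
  (Real.concaveOn_rpow hr0 hr1).neg

lemma antitoneOn_neg_rpow_Ici {r : ℝ} (hr : 0 ≤ r) :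
    AntitoneOn (fun x : ℝ => -x ^ r) (Set.Ici 0) :=
  (Real.monotoneOn_rpow_Ici_of_exponent_nonneg hr).neg

end Jensen

section Powers

lemma isHermitian_mpow (A : Mat n) (r : ℝ) : (mpow A r).IsHermitian :=
  (cfc_predicate _ A : IsSelfAdjoint _)

lemma posSemidef_cfc {A : Mat n} (hA : A.PosSemidef) {f : ℝ → ℝ} (hf : ∀ x, 0 ≤ x → 0 ≤ f x) :
    (cfc f A).PosSemidef := by
  have hH : (cfc f A).IsHermitian := (cfc_predicate f A : IsSelfAdjoint _)
  refine .of_dotProduct_mulVec_nonneg hH fun v => ?_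
  rw [← ofReal_quadForm hH, quadForm_cfc hA.1]
  exact_mod_cast Finset.sum_nonneg fun j _ =>
    mul_nonneg (spectralWeight_nonneg hA.1 v j) (hf _ (hA.eigenvalues_nonneg j))

lemma posSemidef_mpow {A : Mat n} (hA : A.PosSemidef) (r : ℝ) : (mpow A r).PosSemidef :=
  posSemidef_cfc hA fun _ hx => Real.rpow_nonneg hx r

lemma mpow_one {A : Mat n} (hA : A.IsHermitian) : mpow A 1 = A := by
  simp only [mpow, Real.rpow_one]
  exact cfc_id' ℝ A hA.isSelfAdjoint

lemma mpow_mul_mpow {A : Mat n} (hA : A.PosSemidef) {a b : ℝ} (hab : a + b ≠ 0) :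
    mpow A a * mpow A b = mpow A (a + b) := by
  rw [mpow, mpow, cfc_mul_cfc, mpow]
  exact cfc_congr_of_nonneg hA fun x hx => (Real.rpow_add' hx hab).symm

lemma cfc_mpow {A : Mat n} (hA : A.IsHermitian) (f : ℝ → ℝ) (r : ℝ) :
    cfc f (mpow A r) = cfc (fun x => f (x ^ r)) A :=
  (cfc_comp' f (fun x => x ^ r) A ((A.finite_real_spectrum.image _).continuousOn f)
    (continuousOn_spectrum _) hA.isSelfAdjoint).symm

lemma sandwich_eq (p : ℝ) (ρ σ : Mat n) :
    sandwich p ρ σ = mpow σ ((1 - p) / (2 * p)) * ρ * (mpow σ ((1 - p) / (2 * p)))ᴴ := by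
  rw [(isHermitian_mpow _ _).eq, sandwich]

lemma posSemidef_sandwich {ρ : Mat n} (hρ : ρ.PosSemidef) (p : ℝ) (σ : Mat n) :
    (sandwich p ρ σ).PosSemidef := by
  rw [sandwich_eq]
  exact hρ.mul_mul_conjTranspose_same _

lemma posSemidef_smul_mpow_sub_sandwich {ρ σ : Mat n} (hσ : σ.PosSemidef) {c : ℝ}
    (h : (c • σ - ρ).PosSemidef) {p : ℝ} (hp : 0 < p) :
    (c • mpow σ p⁻¹ - sandwich p ρ σ).PosSemidef := by
  set a := (1 - p) / (2 * p) with ha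
  have ha1 : a + 1 + a = p⁻¹ := by rw [ha]; field_simp; ring
  have ha0 : a + 1 ≠ 0 := by
    have : a + 1 = (p + 1) / (2 * p) := by rw [ha]; field_simp; ring
    rw [this]; positivity
  have hpow : mpow σ a * σ * mpow σ a = mpow σ p⁻¹ := by
    nth_rw 2 [← mpow_one hσ.1]
    rw [mpow_mul_mpow hσ ha0, mpow_mul_mpow hσ (ha1 ▸ inv_ne_zero hp.ne'), ha1]
  have := h.mul_mul_conjTranspose_same (mpow σ a)
  rwa [(isHermitian_mpow _ _).eq, mul_sub, sub_mul, mul_smul_comm, smul_mul_assoc,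
    hpow] at this

end Powers

section Support

lemma suppLe.mul_eq_zero_of_mul_eq_zero {ρ σ : Mat n} (h : suppLe ρ σ) {M : Mat n}
    (hM : σ * M = 0) : ρ * M = 0 := by
  ext i j
  have := congrFun (h (fun k => M k j) (funext fun i => congrFun (congrFun hM i) j)) i
  exact this

lemma suppLe.mul_cfc_eq_self {ρ σ : Mat n} (h : suppLe ρ σ) (hσ : σ.PosSemidef) {f : ℝ → ℝ}
    (hf : ∀ x, 0 < x → f x = 1) : ρ * cfc f σ = ρ := by
  have hker : σ * (1 - cfc f σ) = 0 := by
    have hmul : σ * cfc f σ = cfc (fun x => id x * f x) σ := by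
      rw [← cfc_mul_cfc, cfc_id ℝ σ hσ.1.isSelfAdjoint]
    have hid : cfc (fun x => id x * f x) σ = σ := by
      conv_rhs => rw [← cfc_id ℝ σ hσ.1.isSelfAdjoint]
      refine cfc_congr_of_nonneg hσ fun x hx => ?_
      rcases hx.eq_or_lt with rfl | hx
      · rw [id, zero_mul]
      · rw [hf x hx, mul_one]
    rw [mul_sub, mul_one, hmul, hid, sub_self]
  have := h.mul_eq_zero_of_mul_eq_zero hker
  rwa [mul_sub, mul_one, sub_eq_zero, eq_comm] at this

lemma suppLe_of_posSemidef_sub {ρ σ : Mat n} (hρ : ρ.PosSemidef) {c : ℝ}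
    (h : (c • σ - ρ).PosSemidef) : suppLe ρ σ := by
  intro v hv
  have hle : quadForm ρ v ≤ 0 := by
    simpa [quadForm, hv] using quadForm_le_of_posSemidef h v
  refine (hρ.dotProduct_mulVec_zero_iff v).1 ?_
  rw [← ofReal_quadForm hρ.1, hle.antisymm (quadForm_nonneg hρ v), Complex.ofReal_zero]

lemma suppLe.eigenvalues_pos {ρ σ : Mat n} (h : suppLe ρ σ) (hρ : ρ.IsHermitian)
    (hσ : σ.PosSemidef) {v : n → ℂ} {μ : ℝ} (hμ : μ ≠ 0) (hv : ρ *ᵥ v = (μ : ℂ) • v) {k : n}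
    (hk : spectralWeight hσ.1 v k ≠ 0) : 0 < hσ.1.eigenvalues k := by
  refine (hσ.eigenvalues_nonneg k).lt_of_ne fun h0 => hk ?_
  have hker : ρ *ᵥ eigvec hσ.1 k = 0 :=
    h _ (by rw [mulVec_eigvec, ← h0, Complex.ofReal_zero, zero_smul])
  have horth : (μ : ℂ) * (star (eigvec hσ.1 k) ⬝ᵥ v) = 0 := by
    have hker' := congrArg star hker
    rw [star_mulVec, hρ.eq, star_zero] at hker'
    rw [← smul_eq_mul, ← dotProduct_smul, ← hv, dotProduct_mulVec, hker', zero_dotProduct]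
  rw [spectralWeight, (mul_eq_zero.1 horth).resolve_left (Complex.ofReal_ne_zero.2 hμ), norm_zero,
    zero_pow two_ne_zero]

end Support

section UpperBound

lemma traceR_sub (A B : Mat n) : traceR (A - B) = traceR A - traceR B := by
  rw [traceR, trace_sub, Complex.sub_re, traceR, traceR]

lemma IsDensity.traceR_eq_one {ρ : Mat n} (hρ : IsDensity ρ) : traceR ρ = 1 := by
  rw [traceR, hρ.2, Complex.one_re]

lemma traceR_smul (c : ℝ) (A : Mat n) : traceR (c • A) = c * traceR A := by
  rw [traceR, trace_smul, Complex.real_smul, Complex.re_ofReal_mul, traceR]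

lemma quadForm_mulVec (A M : Mat n) (v : n → ℂ) :
    quadForm A (M *ᵥ v) = quadForm (Mᴴ * A * M) v := by
  rw [quadForm, star_mulVec, ← dotProduct_mulVec, mulVec_mulVec, mulVec_mulVec, quadForm,
    mul_assoc]

lemma eigenvalue_mul_sq_norm_le_quadForm {X : Mat n} (hX : X.PosSemidef) (u : n → ℂ) (j : n) :
    hX.1.eigenvalues j * ‖star (eigvec hX.1 j) ⬝ᵥ u‖ ^ 2 ≤ quadForm X u := by
  rw [quadForm_eq_sum hX.1, mul_comm]
  exact Finset.single_le_sum
    (f := fun k => spectralWeight hX.1 u k * hX.1.eigenvalues k)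
    (fun k _ => mul_nonneg (spectralWeight_nonneg hX.1 u k) (hX.eigenvalues_nonneg k))
    (Finset.mem_univ j)

lemma eigenvalue_mul_quadForm_inv_le {X S : Mat n} (hX : X.PosSemidef) (hS : S.PosSemidef) {c : ℝ}
    (hc : 0 ≤ c) (h : (c • S - X).PosSemidef) (j : n) :
    hX.1.eigenvalues j * quadForm (cfc (fun x : ℝ => x⁻¹) S) (eigvec hX.1 j) ≤ c := by
  set M : Mat n := cfc (fun x : ℝ => x⁻¹) S
  set v := eigvec hX.1 j
  have hM : M.PosSemidef := posSemidef_cfc hS fun _ => inv_nonneg.2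
  have hMSM : Mᴴ * S * M = M := by
    rw [hM.1.eq]
    rw [← cfc_id' ℝ S hS.1.isSelfAdjoint, cfc_mul_cfc, cfc_mul_cfc]
    exact cfc_congr fun x _ => by simpa only [inv_inv] using mul_inv_mul_cancel x⁻¹
  -- `M` is a generalized inverse of `S`, so testing `X ≤ c S` on `M v` gives `μ t² ≤ c t`.
  have htest : hX.1.eigenvalues j * quadForm M v ^ 2 ≤ c * quadForm M v := by
    have hnorm : ‖star v ⬝ᵥ M *ᵥ v‖ ^ 2 = quadForm M v ^ 2 := by
      rw [← ofReal_quadForm hM.1, Complex.norm_real, Real.norm_eq_abs, sq_abs]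
    rw [← hnorm]
    refine (eigenvalue_mul_sq_norm_le_quadForm hX (M *ᵥ v) j).trans
      ((quadForm_le_of_posSemidef h _).trans_eq ?_)
    rw [quadForm_mulVec, hMSM]
  rcases (quadForm_nonneg hM v).eq_or_lt with ht | ht
  · rwa [← ht, mul_zero]
  · exact le_of_mul_le_mul_right (by rwa [mul_assoc, ← sq]) ht

/-- With `f = -log` this compares `D_1` with `D_∞`, with `f = ± t ^ (1 - p)` it does so
for `D_p`. -/
lemma traceR_cfc_le_traceR_mul_cfc {X S : Mat n} (hX : X.PosSemidef) (hS : S.PosSemidef) {c : ℝ}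
    (hc : 0 < c) (h : (c • S - X).PosSemidef) {f : ℝ → ℝ} (hf : ConvexOn ℝ (Set.Ioi 0) f)
    (hanti : AntitoneOn f (Set.Ioi 0)) :
    traceR (cfc (fun x => x * f (c / x)) X) ≤ traceR (X * cfc (fun x => f x⁻¹) S) := by
  rw [traceR_cfc hX.1, traceR_mul_eq_sum hX.1]
  refine Finset.sum_le_sum fun j _ => ?_
  rcases (hX.eigenvalues_nonneg j).eq_or_lt with hμ | hμ
  · rw [← hμ, zero_mul, zero_mul]
  have hv := star_eigvec_dotProduct_eigvec hX.1 j
  have hbound := eigenvalue_mul_quadForm_inv_le hX hS hc.le h j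
  have hpos (k : n) (hk : spectralWeight hS.1 (eigvec hX.1 j) k ≠ 0) :
      (hS.1.eigenvalues k)⁻¹ ∈ Set.Ioi (0 : ℝ) :=
    inv_pos.2 ((suppLe_of_posSemidef_sub hX h).eigenvalues_pos hX.1 hS hμ.ne'
      (mulVec_eigvec hX.1 j) hk)
  refine mul_le_mul_of_nonneg_left ?_ hμ.le
  exact le_quadForm_cfc_of_antitoneOn hS.1 hv hf hanti hpos (div_pos hc hμ)
    ((le_div_iff₀' hμ).2 hbound)

lemma Dinf_le_log {ρ σ : Mat n} (hρ : IsDensity ρ) (hσ : IsDensity σ) {c : ℝ} (hc : 0 < c)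
    (h : (c • σ - ρ).PosSemidef) : Dinf ρ σ ≤ (Real.log c : ℝ) := by
  have hone : ∀ d ∈ {d : ℝ | 0 ≤ d ∧ (d • σ - ρ).PosSemidef}, (1 : ℝ) ≤ d := by
    rintro d ⟨-, hd⟩
    have := hd.trace_nonneg
    rw [trace_sub, trace_smul, hσ.2, hρ.2, Complex.real_smul, mul_one, sub_nonneg] at this
    exact_mod_cast this
  rw [Dinf, if_pos ⟨c, hc.le, h⟩, EReal.coe_le_coe_iff]
  exact Real.log_le_log (zero_lt_one.trans_le (le_csInf ⟨c, hc.le, h⟩ hone))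
    (csInf_le ⟨1, hone⟩ ⟨hc.le, h⟩)

lemma DU_le_log {ρ σ : Mat n} (hρ : IsDensity ρ) (hσ : σ.PosSemidef) {c : ℝ} (hc : 0 < c)
    (h : (c • σ - ρ).PosSemidef) : DU ρ σ ≤ (Real.log c : ℝ) := by
  rw [DU, if_pos (suppLe_of_posSemidef_sub hρ.1 h), EReal.coe_le_coe_iff, traceR_sub]
  have hineq := traceR_cfc_le_traceR_mul_cfc hρ.1 hσ hc h convexOn_neg_log_Ioi
    antitoneOn_neg_log_Ioi
  have hentropy : traceR (cfc (fun x => x * -Real.log (c / x)) ρ) =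
      traceR (ρ * mlog ρ) - Real.log c := by
    have hsplit : cfc (fun x => x * -Real.log (c / x)) ρ =
        cfc (fun x => x * Real.log x - Real.log c * x) ρ :=
      cfc_congr_of_nonneg hρ.1 fun x hx => by
        rcases hx.eq_or_lt with rfl | hx
        · simp only [zero_mul, mul_zero, sub_zero]
        · rw [Real.log_div hc.ne' hx.ne']
          ring
    rw [hsplit, cfc_sub _ _ ρ (continuousOn_spectrum _) (continuousOn_spectrum _), ← cfc_mul_cfc,
      cfc_const_mul _ _ ρ (continuousOn_spectrum _), cfc_id' ℝ ρ hρ.1.1.isSelfAdjoint, traceR_sub,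
      traceR_smul, hρ.traceR_eq_one, mul_one, mlog]
  have hcross : cfc (fun x => -Real.log x⁻¹) σ = mlog σ := by
    simp only [Real.log_inv, neg_neg]
    rfl
  rw [hentropy, hcross] at hineq
  linarith

lemma traceR_sandwich_mul_mpow {ρ σ : Mat n} (hσ : σ.PosSemidef) (h : suppLe ρ σ) (p : ℝ) :
    traceR (sandwich p ρ σ * mpow σ (-((1 - p) / (2 * p) + (1 - p) / (2 * p)))) = traceR ρ := by
  set a := (1 - p) / (2 * p) with ha
  have hcancel : ρ * (mpow σ a * mpow σ (-(a + a)) * mpow σ a) = ρ := by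
    rw [mpow, mpow, cfc_mul_cfc, cfc_mul_cfc]
    refine h.mul_cfc_eq_self hσ fun x hx => ?_
    rw [← Real.rpow_add hx, ← Real.rpow_add hx]
    ring_nf
    exact Real.rpow_zero x
  have hcycle : (sandwich p ρ σ * mpow σ (-(a + a))).trace =
      (ρ * (mpow σ a * mpow σ (-(a + a)) * mpow σ a)).trace := by
    rw [sandwich, ← ha, mul_assoc, mul_assoc, trace_mul_comm]
    simp only [mul_assoc]
  rw [traceR, hcycle, hcancel, traceR]

lemma mul_traceR_sandwich_le {ρ σ : Mat n} (hρ : IsDensity ρ) (hσ : σ.PosSemidef) {c : ℝ}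
    (hc : 0 < c) (h : (c • σ - ρ).PosSemidef) {p : ℝ} (hp : 0 < p) {ε : ℝ}
    (hconv : ConvexOn ℝ (Set.Ioi 0) fun x : ℝ => ε * x ^ (1 - p))
    (hanti : AntitoneOn (fun x : ℝ => ε * x ^ (1 - p)) (Set.Ioi 0)) :
    ε * traceR (mpow (sandwich p ρ σ) p) ≤ ε * c ^ (p - 1) := by
  set X := sandwich p ρ σ
  have hX : X.PosSemidef := posSemidef_sandwich hρ.1 p σ
  have hineq := traceR_cfc_le_traceR_mul_cfc hX (posSemidef_mpow hσ p⁻¹) hc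
    (posSemidef_smul_mpow_sub_sandwich hσ h hp) hconv hanti
  have hleft : cfc (fun x => x * (ε * (c / x) ^ (1 - p))) X = (ε * c ^ (1 - p)) • mpow X p := by
    rw [mpow, ← cfc_const_mul _ _ X (continuousOn_spectrum _)]
    refine cfc_congr_of_nonneg hX fun x hx => ?_
    rcases hx.eq_or_lt with rfl | hx
    · rw [zero_mul, Real.zero_rpow hp.ne', mul_zero]
    · rw [Real.div_rpow hc.le hx.le, Real.rpow_sub hx, Real.rpow_one]
      field_simp
  have hright : cfc (fun x => ε * x⁻¹ ^ (1 - p)) (mpow σ p⁻¹) =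
      ε • mpow σ (-((1 - p) / (2 * p) + (1 - p) / (2 * p))) := by
    rw [cfc_mpow hσ.1, mpow, ← cfc_const_mul _ _ σ (continuousOn_spectrum _)]
    refine cfc_congr_of_nonneg hσ fun x hx => ?_
    rw [Real.inv_rpow (Real.rpow_nonneg hx _), ← Real.rpow_mul hx, ← Real.rpow_neg hx]
    congr 2
    field_simp
    ring
  rw [hleft, hright, mul_smul_comm, traceR_smul, traceR_smul,
    traceR_sandwich_mul_mpow hσ (suppLe_of_posSemidef_sub hρ.1 h), hρ.traceR_eq_one] at hineq
  have hcancel : c ^ (p - 1) * c ^ (1 - p) = 1 := by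
    rw [← Real.rpow_add hc, sub_add_sub_cancel, sub_self, Real.rpow_zero]
  calc ε * traceR (mpow X p)
      = c ^ (p - 1) * (ε * c ^ (1 - p) * traceR (mpow X p)) := by
        linear_combination -(ε * traceR (mpow X p)) * hcancel
    _ ≤ c ^ (p - 1) * (ε * 1) := by gcongr
    _ = ε * c ^ (p - 1) := by ring

lemma traceR_mpow_pos {A : Mat n} (hA : A.PosSemidef) (hA0 : A ≠ 0) (p : ℝ) :
    0 < traceR (mpow A p) := by
  obtain ⟨j, hj⟩ : ∃ j, hA.1.eigenvalues j ≠ 0 :=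
    Function.ne_iff.1 (mt hA.1.eigenvalues_eq_zero_iff.1 hA0)
  rw [mpow, traceR_cfc hA.1]
  exact Finset.sum_pos' (fun k _ => Real.rpow_nonneg (hA.eigenvalues_nonneg k) p)
    ⟨j, Finset.mem_univ j, Real.rpow_pos_of_pos ((hA.eigenvalues_nonneg j).lt_of_ne' hj) p⟩

lemma traceR_mpow_sandwich_pos {ρ σ : Mat n} (hρ : IsDensity ρ) (hσ : σ.PosSemidef)
    (h : suppLe ρ σ) (p : ℝ) : 0 < traceR (mpow (sandwich p ρ σ) p) := by
  refine traceR_mpow_pos (posSemidef_sandwich hρ.1 p σ) (fun h0 => ?_) p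
  have := traceR_sandwich_mul_mpow hσ h p
  rw [h0, zero_mul, hρ.traceR_eq_one, traceR, trace_zero, Complex.zero_re] at this
  exact zero_ne_one this

lemma inv_mul_log_traceR_sandwich_le {ρ σ : Mat n} (hρ : IsDensity ρ) (hσ : σ.PosSemidef) {c : ℝ}
    (hc : 0 < c) (h : (c • σ - ρ).PosSemidef) {p : ℝ} (hp0 : 0 < p) (hp1 : p ≠ 1) :
    (p - 1)⁻¹ * Real.log (traceR (mpow (sandwich p ρ σ) p)) ≤ Real.log c := by
  have hT := traceR_mpow_sandwich_pos hρ hσ (suppLe_of_posSemidef_sub hρ.1 h) p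
  rcases lt_or_gt_of_ne hp1 with hp | hp
  · have hconv := (convexOn_neg_rpow_Ici (sub_nonneg.2 hp.le) (sub_le_self 1 hp0.le)).subset
      Set.Ioi_subset_Ici_self (convex_Ioi 0)
    have hanti := (antitoneOn_neg_rpow_Ici (sub_nonneg.2 hp.le)).mono Set.Ioi_subset_Ici_self
    have hbound := mul_traceR_sandwich_le hρ hσ hc h hp0 (ε := -1)
      (by simpa only [neg_one_mul] using hconv) (by simpa only [neg_one_mul] using hanti)
    rw [neg_one_mul, neg_one_mul, neg_le_neg_iff] at hbound
    have hlog := Real.log_le_log (Real.rpow_pos_of_pos hc _) hbound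
    rw [Real.log_rpow hc] at hlog
    rwa [← div_eq_inv_mul, div_le_iff_of_neg' (sub_neg.2 hp)]
  · have hbound := mul_traceR_sandwich_le hρ hσ hc h hp0 (ε := 1)
      (by simpa only [one_mul] using convexOn_rpow_Ioi_of_nonpos (sub_nonpos.2 hp.le))
      (by simpa only [one_mul] using
        Real.antitoneOn_rpow_Ioi_of_exponent_nonpos (sub_nonpos.2 hp.le))
    rw [one_mul, one_mul] at hbound
    have hlog := Real.log_le_log hT hbound
    rwa [Real.log_rpow hc, ← inv_mul_le_iff₀ (sub_pos.2 hp)] at hlog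

lemma Dp_le_log {ρ σ : Mat n} (hρ : IsDensity ρ) (hσ : IsDensity σ) {c : ℝ} (hc : 0 < c)
    (h : (c • σ - ρ).PosSemidef) {p : ℝ≥0∞} (hp : p ≠ 0) : Dp p ρ σ ≤ (Real.log c : ℝ) := by
  have hsupp := suppLe_of_posSemidef_sub hρ.1 h
  have hT := traceR_mpow_sandwich_pos hρ hσ.1 hsupp p.toReal
  unfold Dp
  split_ifs with htop hone hnsupp hzero
  · exact Dinf_le_log hρ hσ hc h
  · exact DU_le_log hρ hσ.1 hc h
  · exact absurd hsupp hnsupp.2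
  · exact absurd hzero hT.ne'
  · exact EReal.coe_le_coe_iff.2 (inv_mul_log_traceR_sandwich_le hρ hσ.1 hc h
      (ENNReal.toReal_pos hp htop) (mt (ENNReal.toReal_eq_one_iff p).1 hone))

end UpperBound

section LowerBound

/-- The pure state `v v*` of a unit vector `v`. -/
def pureState (v : n → ℂ) : Mat n := vecMulVec v (star v)

lemma posSemidef_pureState (v : n → ℂ) : (pureState v).PosSemidef :=
  posSemidef_vecMulVec_self_star v

lemma trace_pureState (v : n → ℂ) : (pureState v).trace = star v ⬝ᵥ v := by
  rw [pureState, trace_vecMulVec, dotProduct_comm]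

lemma isDensity_pureState {v : n → ℂ} (hv : star v ⬝ᵥ v = 1) : IsDensity (pureState v) :=
  ⟨posSemidef_pureState v, (trace_pureState v).trans hv⟩

lemma pureState_mulVec_self (v : n → ℂ) : pureState v *ᵥ v = (star v ⬝ᵥ v) • v := by
  rw [pureState, vecMulVec_mulVec, op_smul_eq_smul]

lemma traceR_pureState_mul (v : n → ℂ) (M : Mat n) : traceR (pureState v * M) = quadForm M v := by
  rw [traceR, pureState, trace_mul_comm, mul_vecMulVec, trace_vecMulVec, dotProduct_comm, quadForm]

lemma quadForm_pureState_self {v : n → ℂ} (hv : star v ⬝ᵥ v = 1) :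
    quadForm (pureState v) v = 1 := by
  rw [quadForm, pureState_mulVec_self, hv, one_smul, hv, Complex.one_re]

lemma traceR_cfc_pureState {f : ℝ → ℝ} (hf : f 0 = 0) {v : n → ℂ} {t : ℝ}
    (ht : star v ⬝ᵥ v = (t : ℂ)) : traceR (cfc f (pureState v)) = f t := by
  have hH := (posSemidef_pureState v).1
  set μ := hH.eigenvalues
  have hsq : pureState v * pureState v = t • pureState v := by
    rw [pureState, vecMulVec_mul_vecMulVec, ht, vecMulVec_smul]
    rfl
  have hμ (j : n) : μ j * μ j = t * μ j := by
    have := congrArg (fun M => star (eigvec hH j) ⬝ᵥ M *ᵥ eigvec hH j) hsq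
    simp only [← mulVec_mulVec, smul_mulVec, mulVec_eigvec, mulVec_smul, dotProduct_smul,
      star_eigvec_dotProduct_eigvec, Complex.real_smul, smul_eq_mul, mul_one] at this
    exact_mod_cast this
  have hsum : ∑ j, μ j = t := by
    have := hH.trace_eq_sum_eigenvalues
    rw [trace_pureState, ht] at this
    exact (Complex.ofReal_injective (this.trans (Complex.ofReal_sum _ _).symm)).symm
  have hf' (j : n) : f (μ j) * t = f t * μ j := by
    by_cases hj : μ j = 0
    · rw [hj, hf, zero_mul, mul_zero]
    · rw [mul_right_cancel₀ hj (hμ j)]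
  rw [traceR_cfc hH]
  rcases eq_or_ne t 0 with rfl | ht0
  · have (j : n) : μ j = 0 := by simpa using hμ j
    simp only [μ] at this
    simp only [this, hf, Finset.sum_const_zero]
  · refine mul_right_cancel₀ ht0 ?_
    rw [Finset.sum_mul, Finset.sum_congr rfl fun j _ => hf' j, ← Finset.mul_sum, hsum]

lemma traceR_mpow_sandwich_pureState {σ : Mat n} (hσ : σ.PosSemidef) (v : n → ℂ) {p : ℝ}
    (hp0 : 0 < p) (hp1 : p ≠ 1) :
    traceR (mpow (sandwich p (pureState v) σ) p) = quadForm (mpow σ ((1 - p) / p)) v ^ p := by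
  set a := (1 - p) / (2 * p) with ha
  have haa : a + a = (1 - p) / p := by rw [ha]; field_simp; ring
  have hsand : sandwich p (pureState v) σ = pureState (mpow σ a *ᵥ v) := by
    rw [sandwich_eq, ← ha, pureState, mul_vecMulVec, vecMulVec_mul, pureState, star_mulVec]
  have hnorm : star (mpow σ a *ᵥ v) ⬝ᵥ (mpow σ a *ᵥ v) =
      (quadForm (mpow σ ((1 - p) / p)) v : ℂ) := by
    rw [ofReal_quadForm (isHermitian_mpow _ _), star_mulVec, (isHermitian_mpow _ _).eq,
      ← dotProduct_mulVec, mulVec_mulVec, mpow_mul_mpow hσ, haa]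
    rw [haa]
    exact div_ne_zero (sub_ne_zero.2 hp1.symm) hp0.ne'
  exact (congrArg _ (congrArg _ hsand)).trans
    (traceR_cfc_pureState (f := fun x => x ^ p) (Real.zero_rpow hp0.ne') hnorm)

variable {v : n → ℂ} {σ : Mat n} {C : ℝ}

lemma eigenvalues_pos_of_suppLe_pureState (hv : star v ⬝ᵥ v = 1) (hσ : σ.PosSemidef)
    (h : suppLe (pureState v) σ) (k : n) (hk : spectralWeight hσ.1 v k ≠ 0) :
    0 < hσ.1.eigenvalues k :=
  h.eigenvalues_pos (posSemidef_pureState v).1 hσ one_ne_zero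
    (by rw [pureState_mulVec_self, hv, Complex.ofReal_one]) hk

lemma log_le_Dinf_pureState (hv : star v ⬝ᵥ v = 1) (hC : 0 < C) (h : quadForm σ v ≤ C⁻¹) :
    (Real.log C : ℝ) ≤ Dinf (pureState v) σ := by
  unfold Dinf
  split_ifs with hex
  · refine EReal.coe_le_coe_iff.2 (Real.log_le_log hC (le_csInf hex ?_))
    rintro c ⟨hc, hle⟩
    have hone : 1 ≤ c * C⁻¹ := by
      have := quadForm_le_of_posSemidef hle v
      rw [quadForm_pureState_self hv] at this
      exact this.trans (mul_le_mul_of_nonneg_left h hc)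
    rwa [← div_eq_mul_inv, one_le_div hC] at hone
  · exact le_top

lemma log_le_DU_pureState (hv : star v ⬝ᵥ v = 1) (hσ : σ.PosSemidef) (hC : 0 < C)
    (h : quadForm σ v ≤ C⁻¹) : (Real.log C : ℝ) ≤ DU (pureState v) σ := by
  unfold DU
  split_ifs with hsupp
  · have hpure : traceR (pureState v * mlog (pureState v)) = 0 := by
      rw [mlog]
      nth_rw 1 [← cfc_id' ℝ (pureState v) (posSemidef_pureState v).1.isSelfAdjoint]
      rw [cfc_mul_cfc, traceR_cfc_pureState (f := fun x => x * Real.log x) (zero_mul _)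
        (hv.trans Complex.ofReal_one.symm), Real.log_one, mul_zero]
    have hjensen := le_quadForm_cfc_of_antitoneOn hσ.1 hv convexOn_neg_log_Ioi
      antitoneOn_neg_log_Ioi (g := fun x => x) (eigenvalues_pos_of_suppLe_pureState hv hσ hsupp)
      (inv_pos.2 hC) (by rwa [cfc_id' ℝ σ hσ.1.isSelfAdjoint])
    rw [cfc_neg, quadForm_neg, Real.log_inv, neg_neg] at hjensen
    rw [traceR_sub, hpure, traceR_pureState_mul, zero_sub, EReal.coe_le_coe_iff]
    exact hjensen
  · exact le_top

lemma rpow_le_quadForm_mpow (hv : star v ⬝ᵥ v = 1) (hσ : σ.PosSemidef)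
    (hsupp : suppLe (pureState v) σ) {b : ℝ} (hb : 0 < b) (h : quadForm σ v ≤ b) {r : ℝ}
    (hr : r ≤ 0) : b ^ r ≤ quadForm (mpow σ r) v :=
  le_quadForm_cfc_of_antitoneOn hσ.1 hv (convexOn_rpow_Ioi_of_nonpos hr)
    (Real.antitoneOn_rpow_Ioi_of_exponent_nonpos hr) (g := fun x => x)
    (eigenvalues_pos_of_suppLe_pureState hv hσ hsupp) hb
    (by rwa [cfc_id' ℝ σ hσ.1.isSelfAdjoint])

lemma quadForm_mpow_le_rpow (hv : star v ⬝ᵥ v = 1) (hσ : σ.PosSemidef) {b : ℝ} (hb : 0 ≤ b)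
    (h : quadForm σ v ≤ b) {r : ℝ} (hr0 : 0 ≤ r) (hr1 : r ≤ 1) :
    quadForm (mpow σ r) v ≤ b ^ r := by
  have hjensen := le_quadForm_cfc_of_antitoneOn hσ.1 hv (convexOn_neg_rpow_Ici hr0 hr1)
    (antitoneOn_neg_rpow_Ici hr0) (g := fun x => x) (fun k _ => hσ.eigenvalues_nonneg k) hb
    (by rwa [cfc_id' ℝ σ hσ.1.isSelfAdjoint])
  rwa [cfc_neg, quadForm_neg, neg_le_neg_iff] at hjensen

lemma log_le_inv_mul_log_traceR_sandwich_pureState (hv : star v ⬝ᵥ v = 1) (hσ : σ.PosSemidef)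
    (hC : 0 < C) (h : quadForm σ v ≤ C⁻¹) {p : ℝ} (hp : 2⁻¹ ≤ p) (hp1 : p ≠ 1)
    (hsupp : 1 < p → suppLe (pureState v) σ)
    (hT : traceR (mpow (sandwich p (pureState v) σ) p) ≠ 0) :
    Real.log C ≤ (p - 1)⁻¹ * Real.log (traceR (mpow (sandwich p (pureState v) σ) p)) := by
  have hp0 : 0 < p := by linarith
  rw [traceR_mpow_sandwich_pureState hσ v hp0 hp1] at hT ⊢
  set r := (1 - p) / p with hr
  set t := quadForm (mpow σ r) v
  have ht : 0 < t := (quadForm_nonneg (posSemidef_mpow hσ r) v).lt_of_ne'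
    fun h0 => hT (by rw [show t = 0 from h0, Real.zero_rpow hp0.ne'])
  have hlogb : p * Real.log (C⁻¹ ^ r) = (p - 1) * Real.log C := by
    rw [Real.log_rpow (inv_pos.2 hC), Real.log_inv, hr]
    field_simp
    ring
  have hbpos : 0 < C⁻¹ ^ r := Real.rpow_pos_of_pos (inv_pos.2 hC) r
  rw [Real.log_rpow ht]
  rcases lt_or_gt_of_ne hp1 with hlt | hgt
  · have hr1 : r ≤ 1 := by rw [hr, div_le_one hp0]; linarith
    have hle := quadForm_mpow_le_rpow hv hσ (inv_pos.2 hC).le h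
      (div_nonneg (sub_nonneg.2 hlt.le) hp0.le) hr1
    rw [← div_eq_inv_mul, le_div_iff_of_neg' (sub_neg.2 hlt), ← hlogb]
    exact mul_le_mul_of_nonneg_left (Real.log_le_log ht hle) hp0.le
  · have hle := rpow_le_quadForm_mpow hv hσ (hsupp hgt) (inv_pos.2 hC) h
      (div_nonpos_of_nonpos_of_nonneg (sub_nonpos.2 hgt.le) hp0.le)
    rw [← div_eq_inv_mul, le_div_iff₀' (sub_pos.2 hgt), ← hlogb]
    exact mul_le_mul_of_nonneg_left (Real.log_le_log hbpos hle) hp0.le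

lemma log_le_Dp_pureState (hv : star v ⬝ᵥ v = 1) (hσ : σ.PosSemidef) (hC : 0 < C)
    (h : quadForm σ v ≤ C⁻¹) {p : ℝ≥0∞} (hp : 2⁻¹ ≤ p) :
    (Real.log C : ℝ) ≤ Dp p (pureState v) σ := by
  unfold Dp
  split_ifs with htop hone hnsupp hzero
  · exact log_le_Dinf_pureState hv hC h
  · exact log_le_DU_pureState hv hσ hC h
  · exact le_top
  · exact le_top
  · have hp' : 2⁻¹ ≤ p.toReal := by
      simpa only [ENNReal.toReal_inv, ENNReal.toReal_ofNat] using ENNReal.toReal_mono htop hp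
    exact EReal.coe_le_coe_iff.2 (log_le_inv_mul_log_traceR_sandwich_pureState hv hσ hC h hp'
      (mt (ENNReal.toReal_eq_one_iff p).1 hone) (fun h1 => not_not.1 fun hn => hnsupp ⟨h1, hn⟩)
      hzero)

end LowerBound

section DensitySets

/-- Every density is at most `c` times a density of `S`: the property that bounds the divergence
from `S` by `log c` from above. -/
def DominatesDensities (S : Set (Mat n)) (c : ℝ) : Prop :=
  ∀ ρ : Mat n, IsDensity ρ → ∃ σ ∈ S, IsDensity σ ∧ (c • σ - ρ).PosSemidef

/-- Some unit vector has expectation at most `c⁻¹` in every density of `S`: its pure state has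
divergence at least `log c` from `S`. -/
def HasFlatVector (S : Set (Mat n)) (c : ℝ) : Prop :=
  ∃ v : n → ℂ, star v ⬝ᵥ v = 1 ∧ ∀ σ ∈ S, IsDensity σ → quadForm σ v ≤ c⁻¹

variable {m : Type*} [Fintype m] [DecidableEq m] {S : Set (Mat n)} {c : ℝ}

lemma DominatesDensities.mono {c' : ℝ} (h : DominatesDensities S c) (hc : c ≤ c') :
    DominatesDensities S c' := by
  intro ρ hρ
  obtain ⟨σ, hσS, hσ, hle⟩ := h ρ hρ
  refine ⟨σ, hσS, hσ, ?_⟩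
  have := (hσ.1.smul (sub_nonneg.2 hc)).add hle
  rwa [sub_smul, sub_add_sub_cancel] at this

lemma DominatesDensities.DpRel_le (h : DominatesDensities S c) (hc : 0 < c) {p : ℝ≥0∞}
    (hp : p ≠ 0) : DpRel p Set.univ S ≤ (Real.log c : ℝ) := by
  refine iSup₂_le fun ρ hρ => ?_
  obtain ⟨σ, hσS, hσ, hle⟩ := h ρ hρ.2
  exact (iInf₂_le σ ⟨hσS, hσ⟩).trans (Dp_le_log hρ.2 hσ hc hle hp)

lemma HasFlatVector.le_DpRel (h : HasFlatVector S c) (hc : 0 < c) {p : ℝ≥0∞} (hp : 2⁻¹ ≤ p) :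
    (Real.log c : ℝ) ≤ DpRel p Set.univ S := by
  obtain ⟨v, hv, hle⟩ := h
  refine le_iSup₂_of_le (pureState v) ⟨Set.mem_univ _, isDensity_pureState hv⟩ ?_
  exact le_iInf₂ fun σ hσ => log_le_Dp_pureState hv hσ.2.1 hc (hle σ hσ.1 hσ.2) hp

lemma ne_zero_of_inv_two_le {p : ℝ≥0∞} (hp : 2⁻¹ ≤ p) : p ≠ 0 :=
  ((ENNReal.inv_pos.2 ENNReal.ofNat_ne_top).trans_le hp).ne'

lemma DpRel_eq_log (hdom : DominatesDensities S c) (hflat : HasFlatVector S c) (hc : 0 < c)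
    {p : ℝ≥0∞} (hp : 2⁻¹ ≤ p) : DpRel p Set.univ S = (Real.log c : ℝ) :=
  (hdom.DpRel_le hc (ne_zero_of_inv_two_le hp)).antisymm (hflat.le_DpRel hc hp)

omit [DecidableEq m] in
lemma trace_reindex (e : n ≃ m) (ρ : Mat n) : (reindex e e ρ).trace = ρ.trace :=
  e.symm.sum_comp fun i => ρ i i

lemma isDensity_reindex_iff (e : n ≃ m) {ρ : Mat n} : IsDensity (reindex e e ρ) ↔ IsDensity ρ := by
  rw [IsDensity, IsDensity, trace_reindex, reindex_apply, posSemidef_submatrix_equiv]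

lemma quadForm_reindex (e : n ≃ m) (ρ : Mat n) (v : m → ℂ) :
    quadForm (reindex e e ρ) v = quadForm ρ (v ∘ e) := by
  rw [quadForm, reindex_apply, submatrix_mulVec_equiv, Equiv.symm_symm,
    ← comp_equiv_symm_dotProduct]
  rfl

lemma DominatesDensities.reindex (h : DominatesDensities S c) (e : n ≃ m) :
    DominatesDensities (reindex e e '' S) c := by
  intro ρ hρ
  obtain ⟨σ, hσS, hσ, hle⟩ := h (Matrix.reindex e.symm e.symm ρ) ((isDensity_reindex_iff _).2 hρ)
  refine ⟨_, Set.mem_image_of_mem _ hσS, (isDensity_reindex_iff e).2 hσ, ?_⟩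
  convert hle.submatrix e.symm using 1
  ext i j
  simp

lemma HasFlatVector.reindex (h : HasFlatVector S c) (e : n ≃ m) :
    HasFlatVector (reindex e e '' S) c := by
  obtain ⟨v, hv, hle⟩ := h
  refine ⟨v ∘ e.symm, ?_, ?_⟩
  · rw [← hv]
    exact comp_equiv_dotProduct_comp_equiv (star v) v e.symm
  · rintro _ ⟨σ, hσS, rfl⟩ hσ
    rw [quadForm_reindex, Function.comp_assoc, Equiv.symm_comp_self, Function.comp_id]
    exact hle σ hσS ((isDensity_reindex_iff e).1 hσ)

end DensitySets

section CauchySchwarz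

variable {ι : Type*} [Fintype ι] {X : Mat n}

lemma spectralWeight_sum_smul_le (hX : X.IsHermitian) (c : ι → ℂ) (z : ι → n → ℂ) (j : n) :
    spectralWeight hX (∑ t, c t • z t) j ≤ (∑ t, ‖c t‖ ^ 2) * ∑ t, spectralWeight hX (z t) j := by
  have hnorm : ‖star (eigvec hX j) ⬝ᵥ ∑ t, c t • z t‖ ≤
      ∑ t, ‖c t‖ * ‖star (eigvec hX j) ⬝ᵥ z t‖ := by
    simp only [dotProduct_sum, dotProduct_smul, smul_eq_mul, ← norm_mul]
    exact norm_sum_le _ _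
  exact (pow_le_pow_left₀ (norm_nonneg _) hnorm 2).trans (Finset.sum_mul_sq_le_sq_mul_sq _ _ _)

lemma quadForm_sum_smul_le (hX : X.PosSemidef) (c : ι → ℂ) (z : ι → n → ℂ) :
    quadForm X (∑ t, c t • z t) ≤ (∑ t, ‖c t‖ ^ 2) * ∑ t, quadForm X (z t) := by
  simp only [quadForm_eq_sum hX.1]
  rw [Finset.sum_comm, Finset.mul_sum]
  refine Finset.sum_le_sum fun j _ => ?_
  rw [← Finset.sum_mul, ← mul_assoc]
  exact mul_le_mul_of_nonneg_right (spectralWeight_sum_smul_le hX.1 c z j)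
    (hX.eigenvalues_nonneg j)

lemma quadForm_sum_le (hX : X.PosSemidef) (z : ι → n → ℂ) :
    quadForm X (∑ t, z t) ≤ Fintype.card ι * ∑ t, quadForm X (z t) := by
  simpa using quadForm_sum_smul_le hX 1 z

end CauchySchwarz

section PartialTrace

open scoped Kronecker

variable {A B : Type*} [Fintype A] [DecidableEq A] [Fintype B] [DecidableEq B]

/-- The partial trace over the second tensor factor. -/
def partialTrace (X : Mat (A × B)) : Mat A := of fun a c => ∑ b, X (a, b) (c, b)

/-- The product vector `f ⊗ e_b`, whose expectations in `X`, summed over `b`, give that of `f` in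
the partial trace of `X`. -/
def tensorBasis (f : A → ℂ) (b : B) : A × B → ℂ := fun i => if i.2 = b then f i.1 else 0

omit [Fintype A] [DecidableEq A] in
lemma sum_tensorBasis (x : A × B → ℂ) : ∑ b, tensorBasis (fun a => x (a, b)) b = x := by
  ext ⟨a, b⟩
  simp [tensorBasis, Finset.sum_apply]

lemma star_tensorBasis_dotProduct_mulVec (X : Mat (A × B)) (f : A → ℂ) (b : B) :
    star (tensorBasis f b) ⬝ᵥ X *ᵥ tensorBasis f b =
      ∑ a, ∑ c, star (f a) * (X (a, b) (c, b) * f c) := by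
  simp [dotProduct, mulVec, Fintype.sum_prod_type, tensorBasis, apply_ite star, Finset.mul_sum]

lemma sum_quadForm_tensorBasis (X : Mat (A × B)) (f : A → ℂ) :
    ∑ b, quadForm X (tensorBasis f b) = quadForm (partialTrace X) f := by
  simp only [quadForm, star_tensorBasis_dotProduct_mulVec, ← Complex.re_sum]
  simp only [dotProduct, mulVec, partialTrace, of_apply, Finset.sum_mul, Finset.mul_sum,
    Pi.star_apply]
  rw [Finset.sum_comm]
  refine congrArg _ (Finset.sum_congr rfl fun a _ => ?_)
  rw [Finset.sum_comm]

lemma quadForm_kronecker_one (Y : Mat A) (x : A × B → ℂ) :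
    quadForm (Y ⊗ₖ (1 : Mat B)) x = ∑ b, quadForm Y fun a => x (a, b) := by
  simp only [quadForm, ← Complex.re_sum]
  simp only [dotProduct, mulVec, Fintype.sum_prod_type, kroneckerMap_apply, Pi.star_apply,
    one_apply, mul_ite, mul_one, mul_zero, ite_mul, zero_mul, Finset.sum_ite_eq, Finset.mem_univ,
    if_true]
  rw [Finset.sum_comm]

lemma trace_partialTrace (X : Mat (A × B)) : (partialTrace X).trace = X.trace := by
  simp only [trace, diag_apply, partialTrace, of_apply, Fintype.sum_prod_type]

lemma trace_conjTranspose_mul_kronecker_one (X : Mat (A × B)) (Y : Mat A) :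
    (Xᴴ * (Y ⊗ₖ (1 : Mat B))).trace = ((partialTrace X)ᴴ * Y).trace := by
  simp only [trace, diag_apply, mul_apply, Fintype.sum_prod_type, kroneckerMap_apply, one_apply,
    conjTranspose_apply, partialTrace, of_apply, star_sum, Finset.sum_mul, mul_ite, mul_one,
    mul_zero, Finset.sum_ite_eq', Finset.mem_univ, if_true]
  refine Finset.sum_congr rfl fun a _ => ?_
  rw [Finset.sum_comm]

lemma posSemidef_partialTrace {X : Mat (A × B)} (hX : X.PosSemidef) :
    (partialTrace X).PosSemidef := by
  have hH : (partialTrace X).IsHermitian := by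
    ext a c
    simp only [partialTrace, conjTranspose_apply, of_apply, star_sum]
    exact Finset.sum_congr rfl fun b _ => hX.1.apply _ _
  simpa using posSemidef_sub_of_quadForm_le (c := 1) hH isHermitian_zero fun f => by
    rw [← sum_quadForm_tensorBasis, one_mul]
    simpa [quadForm] using Finset.sum_nonneg fun b _ => quadForm_nonneg hX (tensorBasis f b)

lemma quadForm_le_card_right_mul {X : Mat (A × B)} (hX : X.PosSemidef) (x : A × B → ℂ) :
    quadForm X x ≤ Fintype.card B * quadForm (partialTrace X ⊗ₖ (1 : Mat B)) x := by
  conv_lhs => rw [← sum_tensorBasis x]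
  refine (quadForm_sum_le hX _).trans (mul_le_mul_of_nonneg_left ?_ (Nat.cast_nonneg _))
  rw [quadForm_kronecker_one]
  refine Finset.sum_le_sum fun b _ => ?_
  rw [← sum_quadForm_tensorBasis]
  exact Finset.single_le_sum (f := fun c => quadForm X (tensorBasis (fun a => x (a, b)) c))
    (fun c _ => quadForm_nonneg hX _) (Finset.mem_univ b)

lemma quadForm_le_card_left_mul {X : Mat (A × B)} (hX : X.PosSemidef) (x : A × B → ℂ) :
    quadForm X x ≤ Fintype.card A * quadForm (partialTrace X ⊗ₖ (1 : Mat B)) x := by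
  have hY := (posSemidef_partialTrace hX).1
  set c : A → B → ℂ := fun i b => star (eigvec hY i) ⬝ᵥ fun a => x (a, b)
  set y : A → A × B → ℂ := fun i => ∑ b, c i b • tensorBasis (eigvec hY i) b with hy
  have hx : ∑ i, y i = x := by
    ext ⟨a, b⟩
    simpa [hy, tensorBasis, Finset.sum_apply] using
      congrFun (sum_smul_eigvec hY fun a => x (a, b)) a
  have hyle (i : A) : quadForm X (y i) ≤ (∑ b, ‖c i b‖ ^ 2) * hY.eigenvalues i := by
    refine (quadForm_sum_smul_le hX (c i) _).trans_eq ?_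
    rw [sum_quadForm_tensorBasis, quadForm, mulVec_eigvec, dotProduct_smul,
      star_eigvec_dotProduct_eigvec, smul_eq_mul, mul_one, Complex.ofReal_re]
  conv_lhs => rw [← hx]
  refine (quadForm_sum_le hX y).trans (mul_le_mul_of_nonneg_left ?_ (Nat.cast_nonneg _))
  refine (Finset.sum_le_sum fun i _ => hyle i).trans_eq ?_
  simp only [quadForm_kronecker_one, quadForm_eq_sum hY, Finset.sum_mul]
  exact Finset.sum_comm

lemma posSemidef_min_smul_sub {X : Mat (A × B)} (hX : X.PosSemidef) :
    (((min (Fintype.card A) (Fintype.card B) : ℕ) : ℝ) •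
      (partialTrace X ⊗ₖ (1 : Mat B)) - X).PosSemidef := by
  refine posSemidef_sub_of_quadForm_le
    ((posSemidef_partialTrace hX).kronecker PosSemidef.one).1 hX.1 fun x => ?_
  rcases min_choice (Fintype.card A) (Fintype.card B) with h | h <;> rw [h]
  · exact quadForm_le_card_left_mul hX x
  · exact quadForm_le_card_right_mul hX x

end PartialTrace

section TensorSpan

open scoped Kronecker

variable {A B K : Type*} [Fintype A] [DecidableEq A] [Fintype B] [DecidableEq B]
  [Fintype K] [DecidableEq K]

lemma kronecker_mem_tensorSpan {N₁ : Set (Mat A)} {N₂ : Set (Mat B)} {x : Mat A} {y : Mat B}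
    (hx : x ∈ N₁) (hy : y ∈ N₂) : x ⊗ₖ y ∈ tensorSpan N₁ N₂ :=
  Submodule.subset_span ⟨x, hx, y, hy, rfl⟩

lemma map_mem_of_mem_tensorSpan {M : Type*} [AddCommGroup M] [Module ℂ M] {N₁ : Set (Mat A)}
    {N₂ : Set (Mat B)} (f : Mat (A × B) →ₗ[ℂ] M) {V : Submodule ℂ M}
    (h : ∀ x ∈ N₁, ∀ y ∈ N₂, f (x ⊗ₖ y) ∈ V) {z : Mat (A × B)} (hz : z ∈ tensorSpan N₁ N₂) :
    f z ∈ V := by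
  refine Submodule.span_le (p := V.comap f) |>.2 ?_ hz
  rintro _ ⟨x, hx, y, hy, rfl⟩
  exact h x hx y hy

lemma tensorSpan_assoc (N₁ : Set (Mat K)) (N₂ : Set (Mat A)) (N₃ : Set (Mat B)) :
    tensorSpan N₁ (tensorSpan N₂ N₃) =
      reindex (Equiv.prodAssoc K A B) (Equiv.prodAssoc K A B) ''
        tensorSpan (tensorSpan N₁ N₂) N₃ := by
  have hassoc (x : Mat K) (y : Mat A) (z : Mat B) := kronecker_assoc x y z
  set L := (reindexLinearEquiv ℂ ℂ (Equiv.prodAssoc K A B) (Equiv.prodAssoc K A B)).toLinearMap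
  refine Set.Subset.antisymm ?_ (Set.image_subset_iff.2 ?_)
  · refine fun t ht => map_mem_of_mem_tensorSpan (V := (Submodule.span ℂ _).map L) .id
      (fun x hx w hw => ?_) ht
    refine map_mem_of_mem_tensorSpan (kroneckerBilinear (R := ℂ) x) (fun y hy z hz => ?_) hw
    exact ⟨_, kronecker_mem_tensorSpan (kronecker_mem_tensorSpan hx hy) hz, hassoc x y z⟩
  · refine fun t ht => map_mem_of_mem_tensorSpan (V := Submodule.span ℂ _) L
      (fun w hw z hz => ?_) ht
    refine map_mem_of_mem_tensorSpan (L ∘ₗ (kroneckerBilinear (R := ℂ)).flip z)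
      (fun x hx y hy => ?_) hw
    change reindex _ _ (x ⊗ₖ y ⊗ₖ z) ∈ tensorSpan _ _
    rw [hassoc]
    exact kronecker_mem_tensorSpan hx (kronecker_mem_tensorSpan hy hz)

lemma tensorSpan_univ_univ : tensorSpan (Set.univ : Set (Mat A)) (Set.univ : Set (Mat B)) =
    Set.univ := by
  refine Set.eq_univ_of_forall fun z => ?_
  rw [matrix_eq_sum_single z]
  refine Submodule.sum_mem _ fun i _ => Submodule.sum_mem _ fun j _ => ?_
  rw [show single i j (z i j) = single i.1 j.1 (z i j) ⊗ₖ single i.2 j.2 1 by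
    rw [single_kronecker_single, mul_one]]
  exact kronecker_mem_tensorSpan (Set.mem_univ _) (Set.mem_univ _)

lemma tensorSpan_univ_tensorSpan_univ (N : Set (Mat B)) :
    tensorSpan (Set.univ : Set (Mat K)) (tensorSpan (Set.univ : Set (Mat A)) N) =
      reindex (Equiv.prodAssoc K A B) (Equiv.prodAssoc K A B) ''
        tensorSpan (Set.univ : Set (Mat (K × A))) N := by
  rw [tensorSpan_assoc, tensorSpan_univ_univ]

lemma mem_tensorSpan_univ_scalarAlg {z : Mat (A × B)} :
    z ∈ tensorSpan Set.univ (scalarAlg B) ↔ ∃ y : Mat A, y ⊗ₖ (1 : Mat B) = z := by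
  constructor
  · refine map_mem_of_mem_tensorSpan .id (V := LinearMap.range
      ((kroneckerBilinear (R := ℂ)).flip (1 : Mat B) : Mat A →ₗ[ℂ] Mat (A × B))) ?_
    rintro x - _ ⟨c, rfl⟩
    exact ⟨c • x, (smul_kronecker c x 1).trans (kronecker_smul c x 1).symm⟩
  · rintro ⟨y, rfl⟩
    exact kronecker_mem_tensorSpan (Set.mem_univ y) ⟨1, (one_smul ℂ _).symm⟩

end TensorSpan

section ConditionalExpectation

variable {S : Set (Mat n)} {E : Mat n →ₗ[ℂ] Mat n}

lemma IsCondExp.apply_eq (hE : IsCondExp S E) {x z : Mat n} (hz : z ∈ S)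
    (h : ∀ y ∈ S, (zᴴ * y).trace = (xᴴ * y).trace) : E x = z := by
  have hsub (y : Mat n) (hy : y ∈ S) : ((E x - z)ᴴ * y).trace = 0 := by
    rw [conjTranspose_sub, sub_mul, trace_sub, hE.2.2 x y hy, h y hy, sub_self]
  refine sub_eq_zero.1 (trace_conjTranspose_mul_self_eq_zero_iff.1 ?_)
  rw [mul_sub, trace_sub, hsub _ (hE.1 x), hsub z hz, sub_self]

lemma IsCondExp.trace_apply (hE : IsCondExp S E) (h1 : 1 ∈ S) (x : Mat n) :
    (E x).trace = x.trace := by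
  have := hE.2.2 x 1 h1
  rwa [mul_one, mul_one, trace_conjTranspose, trace_conjTranspose, star_inj] at this

lemma HasFlatVector.le_inv_of_condExp {b c : ℝ} (h : HasFlatVector S c) (hE : IsCondExp S E)
    (h1 : 1 ∈ S) (hb : 0 ≤ b) (hle : ∀ x : Mat n, x.PosSemidef → (E x - b • x).PosSemidef) :
    b ≤ c⁻¹ := by
  obtain ⟨v, hv, hflat⟩ := h
  have hρ := isDensity_pureState hv
  have hsub := hle _ hρ.1
  have hE' : IsDensity (E (pureState v)) := by
    refine ⟨?_, (hE.trace_apply h1 _).trans hρ.2⟩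
    simpa only [sub_add_cancel] using hsub.add (hρ.1.smul hb)
  have hquad := quadForm_nonneg hsub v
  rw [quadForm_sub, quadForm_smul, quadForm_pureState_self hv, mul_one, sub_nonneg] at hquad
  exact hquad.trans (hflat _ (hE.1 _) hE')

lemma ppIndex_eq_inv {c : ℝ} (hE : IsCondExp S E) (h1 : 1 ∈ S) (hflat : HasFlatVector S c)
    (hc : 0 < c) (hdom : ∀ x : Mat n, x.PosSemidef → (c • E x - x).PosSemidef) :
    ppIndex E = c⁻¹ := by
  refine IsGreatest.csSup_eq ⟨⟨(inv_pos.2 hc).le, fun x hx => ?_⟩, fun b hb =>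
    hflat.le_inv_of_condExp hE h1 hb.1 hb.2⟩
  simpa only [smul_sub, inv_smul_smul₀ hc.ne'] using (hdom x hx).smul (inv_pos.2 hc).le

end ConditionalExpectation

section LeftFactor

open scoped Kronecker

variable {A B : Type*} [Fintype A] [DecidableEq A] [Fintype B] [DecidableEq B]

/-- The partial trace over the second factor, normalized and embedded again as `y ⊗ 1`: the
trace-preserving conditional expectation onto `M_A ⊗ ℂ1`. -/
def leftExp (X : Mat (A × B)) : Mat (A × B) :=
  (Fintype.card B : ℝ)⁻¹ • (partialTrace X ⊗ₖ (1 : Mat B))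

lemma leftExp_mem (X : Mat (A × B)) : leftExp X ∈ tensorSpan Set.univ (scalarAlg B) :=
  mem_tensorSpan_univ_scalarAlg.2 ⟨_, smul_kronecker _ _ _⟩

variable [Nonempty B]

lemma trace_leftExp (X : Mat (A × B)) : (leftExp X).trace = X.trace := by
  rw [leftExp, trace_smul, trace_kronecker, trace_partialTrace, trace_one, Complex.real_smul]
  push_cast
  field_simp

lemma isDensity_leftExp {ρ : Mat (A × B)} (hρ : IsDensity ρ) : IsDensity (leftExp ρ) :=
  ⟨((posSemidef_partialTrace hρ.1).kronecker PosSemidef.one).smul (by positivity),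
    (trace_leftExp ρ).trans hρ.2⟩

lemma posSemidef_smul_leftExp_sub {X : Mat (A × B)} (hX : X.PosSemidef) :
    (((Fintype.card B : ℝ) * (min (Fintype.card A) (Fintype.card B) : ℕ)) • leftExp X
      - X).PosSemidef := by
  rw [leftExp, smul_smul, mul_right_comm, mul_inv_cancel₀ (by positivity), one_mul]
  exact posSemidef_min_smul_sub hX

lemma dominatesDensities_tensorSpan_scalarAlg :
    DominatesDensities (tensorSpan (Set.univ : Set (Mat A)) (scalarAlg B))
      ((Fintype.card B : ℝ) * (min (Fintype.card A) (Fintype.card B) : ℕ)) :=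
  fun ρ hρ => ⟨leftExp ρ, leftExp_mem ρ, isDensity_leftExp hρ, posSemidef_smul_leftExp_sub hρ.1⟩

lemma IsCondExp.apply_eq_leftExp {E : Mat (A × B) →ₗ[ℂ] Mat (A × B)}
    (hE : IsCondExp (tensorSpan Set.univ (scalarAlg B)) E) (X : Mat (A × B)) :
    E X = leftExp X := by
  refine hE.apply_eq (leftExp_mem X) fun y hy => ?_
  obtain ⟨y, rfl⟩ := mem_tensorSpan_univ_scalarAlg.1 hy
  rw [trace_conjTranspose_mul_kronecker_one X, leftExp, conjTranspose_smul, conjTranspose_kronecker,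
    conjTranspose_one, smul_mul, ← mul_kronecker_mul, mul_one, trace_smul, trace_kronecker,
    trace_one, star_trivial, Complex.real_smul]
  push_cast
  field_simp

end LeftFactor

section MaximallyEntangled

open scoped Kronecker

variable {ι : Type*} [Fintype ι]

/-- The normalized sum of the basis vectors `e_{q t}`. For `q t = (i t, j t)` with `i` and `j`
injective this is a maximally entangled vector. -/
def uniformVector (q : ι → n) : n → ℂ :=
  (((√(Fintype.card ι))⁻¹ : ℝ) : ℂ) • ∑ t, Pi.single (q t) 1

lemma star_uniformVector_dotProduct_mulVec (q : ι → n) (M : Mat n) :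
    star (uniformVector q) ⬝ᵥ M *ᵥ uniformVector q =
      (((Fintype.card ι : ℝ)⁻¹ : ℝ) : ℂ) * ∑ t, ∑ s, M (q t) (q s) := by
  have hsq : (√(Fintype.card ι))⁻¹ * (√(Fintype.card ι))⁻¹ = (Fintype.card ι : ℝ)⁻¹ := by
    rw [← mul_inv, Real.mul_self_sqrt (Nat.cast_nonneg _)]
  have hstar (i : n) : star (Pi.single i 1 : n → ℂ) = Pi.single i 1 := by
    rw [Pi.star_single, star_one]
  simp only [uniformVector, star_smul, star_sum, hstar, mulVec_smul, mulVec_sum, smul_dotProduct,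
    dotProduct_smul, sum_dotProduct, dotProduct_sum, single_one_dotProduct, mulVec_single_one,
    col_apply, Complex.star_def, Complex.conj_ofReal, smul_eq_mul]
  rw [← Finset.mul_sum, ← mul_assoc, ← Complex.ofReal_mul, hsq, Finset.sum_comm]

lemma quadForm_uniformVector (q : ι → n) (M : Mat n) :
    quadForm M (uniformVector q) = (Fintype.card ι : ℝ)⁻¹ * ∑ t, ∑ s, (M (q t) (q s)).re := by
  rw [quadForm, star_uniformVector_dotProduct_mulVec, Complex.re_ofReal_mul]
  simp only [Complex.re_sum]

lemma star_uniformVector_dotProduct_self [Nonempty ι] {q : ι → n} (hq : q.Injective) :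
    star (uniformVector q) ⬝ᵥ uniformVector q = 1 := by
  have := star_uniformVector_dotProduct_mulVec q 1
  rw [one_mulVec] at this
  simp [this, one_apply, hq.eq_iff]

variable {A B : Type*} [Fintype A] [DecidableEq A] [Fintype B] [DecidableEq B]

lemma quadForm_uniformVector_prodMk_le [Nonempty B] (i : ι ↪ A) (j : ι ↪ B) {y : Mat A}
    (hy : IsDensity (y ⊗ₖ (1 : Mat B))) :
    quadForm (y ⊗ₖ (1 : Mat B)) (uniformVector fun t => (i t, j t)) ≤
      ((Fintype.card B : ℝ) * Fintype.card ι)⁻¹ := by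
  have hdiag (a : A) : 0 ≤ (y a a).re := by
    obtain ⟨b⟩ := ‹Nonempty B›
    simpa using (Complex.le_def.1 (hy.1.diag_nonneg (i := (a, b)))).1
  have htrace : ∑ a, (y a a).re = (Fintype.card B : ℝ)⁻¹ := by
    have := congrArg Complex.re hy.2
    rw [trace_kronecker, trace_one, ← Complex.ofReal_natCast, Complex.re_mul_ofReal,
      Complex.one_re] at this
    simpa only [trace, diag_apply, Complex.re_sum] using eq_inv_of_mul_eq_one_left this
  have hsum : ∑ t, (y (i t) (i t)).re ≤ ∑ a, (y a a).re := by
    rw [← Finset.sum_map Finset.univ i fun a => (y a a).re]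
    exact Finset.sum_le_sum_of_subset_of_nonneg (Finset.subset_univ _) fun a _ _ => hdiag a
  simp only [quadForm_uniformVector, kroneckerMap_apply, one_apply, j.apply_eq_iff_eq, mul_ite,
    mul_one, mul_zero, apply_ite Complex.re, Complex.zero_re, Finset.sum_ite_eq, Finset.mem_univ,
    if_true]
  rw [_root_.mul_inv_rev, ← htrace]
  exact mul_le_mul_of_nonneg_left hsum (by positivity)

lemma hasFlatVector_tensorSpan_scalarAlg [Nonempty A] [Nonempty B] :
    HasFlatVector (tensorSpan (Set.univ : Set (Mat A)) (scalarAlg B))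
      ((Fintype.card B : ℝ) * (min (Fintype.card A) (Fintype.card B) : ℕ)) := by
  have : NeZero (min (Fintype.card A) (Fintype.card B)) :=
    ⟨(lt_min Fintype.card_pos Fintype.card_pos).ne'⟩
  set r := min (Fintype.card A) (Fintype.card B)
  obtain ⟨i⟩ : Nonempty (Fin r ↪ A) :=
    Function.Embedding.nonempty_of_card_le (by simp [r])
  obtain ⟨j⟩ : Nonempty (Fin r ↪ B) :=
    Function.Embedding.nonempty_of_card_le (by simp [r])
  refine ⟨uniformVector fun t => (i t, j t), star_uniformVector_dotProduct_self fun s t hst =>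
    i.injective (congrArg Prod.fst hst), fun σ hσS hσ => ?_⟩
  obtain ⟨y, rfl⟩ := mem_tensorSpan_univ_scalarAlg.1 hσS
  simpa only [Fintype.card_fin] using quadForm_uniformVector_prodMk_le i j hσ

end MaximallyEntangled

section Index

variable {A B : Type*} [Fintype A] [Fintype B] [Nonempty A] [Nonempty B]

lemma card_mul_min_card_pos :
    0 < (Fintype.card B : ℝ) * (min (Fintype.card A) (Fintype.card B) : ℕ) :=
  mul_pos (Nat.cast_pos.2 Fintype.card_pos)
    (Nat.cast_pos.2 (lt_min Fintype.card_pos Fintype.card_pos))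

variable [DecidableEq A] [DecidableEq B]

lemma ppIndex_tensorSpan_scalarAlg {E : Mat (A × B) →ₗ[ℂ] Mat (A × B)}
    (hE : IsCondExp (tensorSpan (Set.univ : Set (Mat A)) (scalarAlg B)) E) :
    ppIndex E = ((Fintype.card B : ℝ) * (min (Fintype.card A) (Fintype.card B) : ℕ))⁻¹ := by
  refine ppIndex_eq_inv hE (mem_tensorSpan_univ_scalarAlg.2 ⟨1, one_kronecker_one⟩)
    hasFlatVector_tensorSpan_scalarAlg card_mul_min_card_pos fun x hx => ?_
  rw [hE.apply_eq_leftExp]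
  exact posSemidef_smul_leftExp_sub hx

lemma DpRel_tensorSpan_scalarAlg {p : ℝ≥0∞} (hp : 2⁻¹ ≤ p) :
    DpRel p Set.univ (tensorSpan (Set.univ : Set (Mat A)) (scalarAlg B)) =
      (Real.log ((Fintype.card B : ℝ) * (min (Fintype.card A) (Fintype.card B) : ℕ)) : ℝ) :=
  DpRel_eq_log dominatesDensities_tensorSpan_scalarAlg hasFlatVector_tensorSpan_scalarAlg
    card_mul_min_card_pos hp

lemma DpCb_tensorSpan_scalarAlg {p : ℝ≥0∞} (hp : 2⁻¹ ≤ p) :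
    DpCb p (tensorSpan (Set.univ : Set (Mat A)) (scalarAlg B)) =
      ((2 * Real.log (Fintype.card B) : ℝ) : EReal) := by
  have hB : (0 : ℝ) < Fintype.card B := by positivity
  rw [two_mul, ← Real.log_mul hB.ne' hB.ne']
  refine le_antisymm (iSup_le fun k => ?_) (le_iSup_of_le (Fintype.card B) ?_)
  · rw [tensorSpan_univ_tensorSpan_univ]
    refine ((dominatesDensities_tensorSpan_scalarAlg.mono ?_).reindex _).DpRel_le (mul_pos hB hB)
      (ne_zero_of_inv_two_le hp)
    gcongr
    exact min_le_right _ _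
  · have hmin : min (Fintype.card (Fin (Fintype.card B) × A)) (Fintype.card B) =
        Fintype.card B := by
      rw [Fintype.card_prod, Fintype.card_fin]
      exact min_eq_right (Nat.le_mul_of_pos_right _ Fintype.card_pos)
    have hflat := hasFlatVector_tensorSpan_scalarAlg (A := Fin (Fintype.card B) × A) (B := B)
    rw [hmin] at hflat
    rw [tensorSpan_univ_tensorSpan_univ]
    exact (hflat.reindex _).le_DpRel (mul_pos hB hB) hp

end Index

theorem statement11_general {A B : Type*} [Fintype A] [DecidableEq A] [Fintype B] [DecidableEq B]
    [Nonempty A] [Nonempty B] (E : Mat (A × B) →ₗ[ℂ] Mat (A × B))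
    (hE : IsCondExp (tensorSpan (Set.univ : Set (Mat A)) (scalarAlg B)) E)
    (p : ℝ≥0∞) (hp : 2⁻¹ ≤ p) :
    ((- Real.log (ppIndex E) : ℝ) : EReal)
        = DpRel p Set.univ (tensorSpan (Set.univ : Set (Mat A)) (scalarAlg B)) ∧
    DpRel p Set.univ (tensorSpan (Set.univ : Set (Mat A)) (scalarAlg B))
        = ((Real.log ((Fintype.card B : ℝ) *
            (min (Fintype.card A) (Fintype.card B) : ℕ)) : ℝ) : EReal) ∧
    DpCb p (tensorSpan (Set.univ : Set (Mat A)) (scalarAlg B))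
        = ((2 * Real.log (Fintype.card B : ℝ) : ℝ) : EReal) := by
  refine ⟨?_, DpRel_tensorSpan_scalarAlg hp, DpCb_tensorSpan_scalarAlg hp⟩
  rw [DpRel_tensorSpan_scalarAlg hp, ppIndex_tensorSpan_scalarAlg hE, Real.log_inv, neg_neg]

/-- for `N = M_n ⊗ ℂ1_m ⊆ M_n ⊗ M_m` and every `p ∈ [1/2,∞]`,
`-log λ(M_n ⊗ M_m : N) = D_p(M_n ⊗ M_m‖N) = log (m · min n m)`, while
`D_{p,cb}(M_n ⊗ M_m‖N) = 2 log m`. -/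
theorem statement11 (n m : ℕ) (hn : 0 < n) (hm : 0 < m)
    (E : Mat (Fin n × Fin m) →ₗ[ℂ] Mat (Fin n × Fin m))
    (hE : IsCondExp (tensorSpan (Set.univ : Set (Mat (Fin n))) (scalarAlg (Fin m))) E)
    (p : ℝ≥0∞) (hp : 2⁻¹ ≤ p) :
    ((- Real.log (ppIndex E) : ℝ) : EReal)
        = DpRel p Set.univ (tensorSpan (Set.univ : Set (Mat (Fin n))) (scalarAlg (Fin m))) ∧
    DpRel p Set.univ (tensorSpan (Set.univ : Set (Mat (Fin n))) (scalarAlg (Fin m)))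
        = ((Real.log ((m : ℝ) * (min n m : ℕ)) : ℝ) : EReal) ∧
    DpCb p (tensorSpan (Set.univ : Set (Mat (Fin n))) (scalarAlg (Fin m)))
        = ((2 * Real.log (m : ℝ) : ℝ) : EReal) := by
  have : Nonempty (Fin n) := ⟨⟨0, hn⟩⟩
  have : Nonempty (Fin m) := ⟨⟨0, hm⟩⟩
  simpa only [Fintype.card_fin] using statement11_general E hE p hp

end GJL
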